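/- Let n > 1 be an integer and let q be a real number with 0 < q < 1. Then P_q(n) := ∏_{1 ≤ k ≤ n, gcd(k,n)=1} Γ_q(k/n) = (Γ_q(1/2))^{φ(n)} · ((q^{1/2}; q)_∞)^{φ(n)} / ∏_{d | n} ((q^{1/d}; q^{1/d})_∞)^{μ(n/d)}, where φ is Euler's totient function and μ is the Möbius function. -/

import Mathlib

/-- Infinite q-Pochhammer symbol `(a; q)_∞ = ∏_{i=0}^∞ (1 - a qⁱ)` (real version). -/
noncomputable def qPochR (a q : ℝ) : ℝ := ∏' i : ℕ, (1 - a * q ^ i)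

/-- The q-gamma function `Γ_q(z) = ((q;q)_∞ / (q^z;q)_∞) (1-q)^{1-z}` for `0 < q < 1`. -/
noncomputable def qGamma (q z : ℝ) : ℝ :=
  qPochR q q / qPochR (q ^ z) q * (1 - q) ^ (1 - z)

theorem summable_norm_neg_mul_pow (a : ℝ) {q : ℝ} (hq0 : 0 ≤ q) (hq1 : q < 1) :
    Summable fun i : ℕ => ‖-(a * q ^ i)‖ := by
  simpa only [norm_neg] using ((summable_geometric_of_lt_one hq0 hq1).mul_left a).norm

theorem multipliable_one_sub_mul_pow (a : ℝ) {q : ℝ} (hq0 : 0 ≤ q) (hq1 : q < 1) :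
    Multipliable fun i : ℕ => 1 - a * q ^ i := by
  simpa only [sub_eq_add_neg] using
    multipliable_one_add_of_summable (summable_norm_neg_mul_pow a hq0 hq1)

theorem qPochR_ne_zero {a q : ℝ} (ha0 : 0 ≤ a) (ha1 : a < 1) (hq0 : 0 ≤ q) (hq1 : q < 1) :
    qPochR a q ≠ 0 := by
  have h := tprod_one_add_ne_zero_of_summable (f := fun i : ℕ => -(a * q ^ i)) (fun i => ?_)
    (summable_norm_neg_mul_pow a hq0 hq1)
  · simpa only [qPochR, sub_eq_add_neg] using h
  · have h1 : q ^ i ≤ 1 := pow_le_one₀ hq0 hq1.le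
    have h2 : 0 ≤ q ^ i := pow_nonneg hq0 i
    have : a * q ^ i < 1 := by nlinarith
    linarith

theorem qPochR_rpow_ne_zero {q z w : ℝ} (hq0 : 0 < q) (hq1 : q < 1) (hz : 0 < z) (hw : 0 < w) :
    qPochR (q ^ z) (q ^ w) ≠ 0 :=
  qPochR_ne_zero (Real.rpow_nonneg hq0.le _) (Real.rpow_lt_one hq0.le hq1 hz)
    (Real.rpow_nonneg hq0.le _) (Real.rpow_lt_one hq0.le hq1 hw)

/-- Splitting an infinite product into residue classes: `∏_{j<m} (a xʲ; xᵐ)_∞ = (a; x)_∞`. -/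
theorem prod_range_qPochR_mul_pow (a : ℝ) {x : ℝ} (hx0 : 0 ≤ x) (hx1 : x < 1) {m : ℕ}
    (hm : 0 < m) : ∏ j ∈ Finset.range m, qPochR (a * x ^ j) (x ^ m) = qPochR a x := by
  have hm0 : 0 ≤ x ^ m := pow_nonneg hx0 m
  have hm1 : x ^ m < 1 := pow_lt_one₀ hx0 hx1 hm.ne'
  have hleft := (hasProd_prod (s := Finset.range m) fun j _ =>
    (multipliable_one_sub_mul_pow (a * x ^ j) hm0 hm1).hasProd).tendsto_prod_nat
  have hright := (multipliable_one_sub_mul_pow a hx0 hx1).hasProd.tendsto_prod_nat.comp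
    (Filter.tendsto_id.const_mul_atTop' hm)
  refine tendsto_nhds_unique hleft (hright.congr fun N => ?_)
  induction N with
  | zero => simp
  | succ N ih =>
    simp only [Function.comp_apply, id] at ih ⊢
    rw [Finset.prod_range_succ, ← ih, mul_add, mul_one, Finset.prod_range_add]
    congr 1
    refine Finset.prod_congr rfl fun j _ => ?_
    rw [pow_add, pow_mul]
    ring

theorem prod_Icc_qPochR_rpow_div {q : ℝ} (hq0 : 0 < q) (hq1 : q < 1) {m : ℕ} (hm : 0 < m) :
    ∏ k ∈ Finset.Icc 1 m, qPochR (q ^ ((k : ℝ) / m)) q =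
      qPochR (q ^ ((1 : ℝ) / m)) (q ^ ((1 : ℝ) / m)) := by
  have hm' : (0 : ℝ) < m := Nat.cast_pos.2 hm
  have hpow (k : ℕ) : (q ^ ((1 : ℝ) / m)) ^ k = q ^ ((k : ℝ) / m) := by
    rw [← Real.rpow_mul_natCast hq0.le]
    congr 1
    ring
  rw [← prod_range_qPochR_mul_pow _ (Real.rpow_nonneg hq0.le _)
    (Real.rpow_lt_one hq0.le hq1 (by positivity)) hm, ← Finset.Ico_add_one_right_eq_Icc,
    Finset.prod_Ico_eq_prod_range, Nat.add_sub_cancel]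
  refine Finset.prod_congr rfl fun j _ => ?_
  rw [← pow_succ', hpow, hpow, div_self hm'.ne', Real.rpow_one, add_comm]

/-- The fractions `k / m` with `1 ≤ k ≤ m`, grouped by their reduced denominators. -/
theorem prod_divisors_prod_coprime_div {α : Type*} [CommMonoid α] (g : ℝ → α) {m : ℕ}
    (hm : 0 < m) :
    ∏ d ∈ m.divisors, ∏ k ∈ (Finset.Icc 1 d).filter (fun k => Nat.gcd k d = 1),
      g ((k : ℝ) / d) = ∏ k ∈ Finset.Icc 1 m, g ((k : ℝ) / m) := by
  rw [← Finset.prod_fiberwise_of_maps_to (s := Finset.Icc 1 m) (t := m.divisors)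
    (g := fun k => Nat.gcd k m)
    (fun k _ => Nat.mem_divisors.2 ⟨Nat.gcd_dvd_right k m, hm.ne'⟩), ← Nat.prod_div_divisors]
  refine Finset.prod_congr rfl fun d hd => ?_
  obtain ⟨e, rfl⟩ := Nat.dvd_of_mem_divisors hd
  have hd0 : 0 < d := Nat.pos_of_mul_pos_right hm
  have he0 : 0 < e := Nat.pos_of_mul_pos_left hm
  rw [Nat.mul_div_cancel_left e hd0]
  refine Finset.prod_bij' (fun k _ => d * k) (fun k _ => k / d) ?_ ?_ ?_ ?_ ?_
  · intro k hk
    simp only [Finset.mem_filter, Finset.mem_Icc] at hk ⊢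
    exact ⟨⟨Nat.mul_pos hd0 hk.1.1, Nat.mul_le_mul_left d hk.1.2⟩,
      by rw [Nat.gcd_mul_left, hk.2, mul_one]⟩
  · intro k hk
    simp only [Finset.mem_filter, Finset.mem_Icc] at hk ⊢
    obtain ⟨j, rfl⟩ : d ∣ k := hk.2 ▸ Nat.gcd_dvd_left k (d * e)
    rw [Nat.mul_div_cancel_left j hd0]
    rw [Nat.gcd_mul_left] at hk
    exact ⟨⟨Nat.pos_of_mul_pos_left hk.1.1, Nat.le_of_mul_le_mul_left hk.1.2 hd0⟩,
      Nat.eq_of_mul_eq_mul_left hd0 (by rw [hk.2, mul_one])⟩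
  · intro k _
    exact Nat.mul_div_cancel_left k hd0
  · intro k hk
    exact Nat.mul_div_cancel' ((Finset.mem_filter.1 hk).2 ▸ Nat.gcd_dvd_left k (d * e))
  · intro k _
    have : (d : ℝ) ≠ 0 := Nat.cast_ne_zero.2 hd0.ne'
    push_cast
    rw [mul_div_mul_left _ _ this]

theorem prod_coprime_qPochR {q : ℝ} (hq0 : 0 < q) (hq1 : q < 1) {n : ℕ} (hn : 0 < n) :
    ∏ k ∈ (Finset.Icc 1 n).filter (fun k => Nat.gcd k n = 1), qPochR (q ^ ((k : ℝ) / n)) q =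
      ∏ d ∈ n.divisors, (qPochR (q ^ ((1 : ℝ) / d)) (q ^ ((1 : ℝ) / d))) ^
        (ArithmeticFunction.moebius (n / d)) := by
  rw [← (ArithmeticFunction.prod_eq_iff_prod_pow_moebius_eq_of_nonzero
    (f := fun n => ∏ k ∈ (Finset.Icc 1 n).filter (fun k => Nat.gcd k n = 1),
      qPochR (q ^ ((k : ℝ) / n)) q)
    (g := fun d => qPochR (q ^ ((1 : ℝ) / d)) (q ^ ((1 : ℝ) / d))) ?_ ?_).1 ?_ n hn]
  · exact Nat.prod_divisorsAntidiagonal' (fun i d : ℕ =>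
      qPochR (q ^ ((1 : ℝ) / d)) (q ^ ((1 : ℝ) / d)) ^ ArithmeticFunction.moebius i)
  · intro m hm
    refine Finset.prod_ne_zero_iff.2 fun k hk => ?_
    have hk0 : 0 < k := (Finset.mem_Icc.1 (Finset.mem_filter.1 hk).1).1
    exact qPochR_ne_zero (Real.rpow_nonneg hq0.le _)
      (Real.rpow_lt_one hq0.le hq1 (by positivity)) hq0.le hq1
  · intro m hm
    exact qPochR_rpow_ne_zero hq0 hq1 (by positivity) (by positivity)
  · intro m hm
    rw [prod_divisors_prod_coprime_div (fun z => qPochR (q ^ z) q) hm,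
      prod_Icc_qPochR_rpow_div hq0 hq1 hm]

theorem card_filter_Icc_gcd_eq_one (n : ℕ) :
    ((Finset.Icc 1 n).filter (fun k => Nat.gcd k n = 1)).card = n.totient := by
  rw [← Nat.filter_coprime_Ico_eq_totient n 1, add_comm 1 n]
  congr 1
  ext k
  simp [Nat.Coprime, Nat.gcd_comm]

/-- The symmetry `k ↦ n - k` of the residues coprime to `n`, summed up. -/
theorem sum_coprime_one_sub_div {n : ℕ} (hn : 1 < n) :
    ∑ k ∈ (Finset.Icc 1 n).filter (fun k => Nat.gcd k n = 1), (1 - (k : ℝ) / n) =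
      (n.totient : ℝ) * (1 - 1 / 2) := by
  have hn0 : (n : ℝ) ≠ 0 := by positivity
  have hlt {k : ℕ} (hk : k ∈ (Finset.Icc 1 n).filter (fun k => Nat.gcd k n = 1)) :
      1 ≤ k ∧ k < n ∧ Nat.gcd k n = 1 := by
    simp only [Finset.mem_filter, Finset.mem_Icc] at hk
    refine ⟨hk.1.1, lt_of_le_of_ne hk.1.2 ?_, hk.2⟩
    rintro rfl
    rw [Nat.gcd_self] at hk
    omega
  have hmem (k : ℕ) (hk : k ∈ (Finset.Icc 1 n).filter (fun k => Nat.gcd k n = 1)) :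
      n - k ∈ (Finset.Icc 1 n).filter (fun k => Nat.gcd k n = 1) := by
    obtain ⟨h1, h2, h3⟩ := hlt hk
    simp only [Finset.mem_filter, Finset.mem_Icc]
    exact ⟨by omega, by rw [Nat.gcd_self_sub_left h2.le, h3]⟩
  have hrefl : ∑ k ∈ (Finset.Icc 1 n).filter (fun k => Nat.gcd k n = 1), (1 - (k : ℝ) / n) =
      ∑ k ∈ (Finset.Icc 1 n).filter (fun k => Nat.gcd k n = 1), (k : ℝ) / n := by
    refine Finset.sum_bij' (fun k _ => n - k) (fun k _ => n - k) hmem hmem ?_ ?_ ?_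
    · intro k hk
      exact Nat.sub_sub_self (hlt hk).2.1.le
    · intro k hk
      exact Nat.sub_sub_self (hlt hk).2.1.le
    · intro k hk
      rw [Nat.cast_sub (hlt hk).2.1.le, sub_div, div_self hn0]
  have hsum := hrefl
  rw [Finset.sum_sub_distrib, Finset.sum_const, card_filter_Icc_gcd_eq_one, nsmul_eq_mul] at hsum
  rw [hrefl]
  linarith

theorem q_short_product (n : ℕ) (hn : 1 < n) (q : ℝ) (hq0 : 0 < q) (hq1 : q < 1) :
    ∏ k ∈ (Finset.Icc 1 n).filter (fun k => Nat.gcd k n = 1), qGamma q ((k : ℝ) / n) =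
      (qGamma q (1 / 2)) ^ n.totient * (qPochR (q ^ ((1 : ℝ) / 2)) q) ^ n.totient /
        ∏ d ∈ n.divisors,
          (qPochR (q ^ ((1 : ℝ) / d)) (q ^ ((1 : ℝ) / d))) ^
            (ArithmeticFunction.moebius (n / d)) := by
  have hhalf : qPochR (q ^ ((1 : ℝ) / 2)) q ≠ 0 :=
    qPochR_ne_zero (Real.rpow_nonneg hq0.le _) (Real.rpow_lt_one hq0.le hq1 (by norm_num))
      hq0.le hq1
  have hpos : 0 < 1 - q := sub_pos.2 hq1
  simp only [qGamma]
  rw [Finset.prod_mul_distrib, Finset.prod_div_distrib, Finset.prod_const,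
    card_filter_Icc_gcd_eq_one, prod_coprime_qPochR hq0 hq1 (by omega),
    ← Real.rpow_sum_of_pos hpos, sum_coprime_one_sub_div hn, mul_comm (n.totient : ℝ),
    Real.rpow_mul_natCast hpos.le, ← mul_pow, div_mul_eq_mul_div,
    mul_right_comm, div_mul_cancel₀ _ hhalf, mul_pow]
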